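/- Let R be a commutative ring, L an invertible R-module, and F, F' finitely generated projective R-modules of rank 2 with F ≅ Hom_R(F', L). Then F ≅ F' ⊗_R Hom_R(det F', L). -/

import Mathlib

open TensorProduct

/-- The second exterior power of a module, as a submodule of the exterior algebra. -/
noncomputable def detMod (R M : Type*) [CommRing R] [AddCommGroup M] [Module R M] :
    Submodule R (ExteriorAlgebra R M) :=
  LinearMap.range (ExteriorAlgebra.ι R (M := M)) ^ 2

lemma aux_two_gen {R M L : Type*} [CommRing R] [AddCommGroup M] [Module R M]
    [AddCommGroup L] [Module R L] (B : M →ₗ[R] M →ₗ[R] L) (hB : ∀ x, B x x = 0)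
    (e : M →ₗ[R] R) (u v x m y : M) (hx : x ∈ Submodule.span R {u, v})
    (hm : m ∈ Submodule.span R {u, v}) (hy : y ∈ Submodule.span R {u, v}) :
    e x • B m y - e y • B m x = e m • B x y := by
  have hvu : B v u = - B u v := by
    have := hB (u + v)
    simp only [map_add, LinearMap.add_apply, hB] at this
    rw [eq_neg_iff_add_eq_zero]
    simpa using this
  obtain ⟨a, b, rfl⟩ := Submodule.mem_span_pair.mp hx
  obtain ⟨c, d, rfl⟩ := Submodule.mem_span_pair.mp hm
  obtain ⟨p, q, rfl⟩ := Submodule.mem_span_pair.mp hy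
  simp only [map_add, map_smul, LinearMap.add_apply, LinearMap.smul_apply, hB, hvu, smul_eq_mul]
  module

lemma aux_local_gen {R M : Type*} [CommRing R] [AddCommGroup M] [Module R M]
    [Module.Finite R M] [Module.Projective R M]
    (hM : ∀ p : PrimeSpectrum R, Module.rankAtStalk M p = 2) (p : PrimeSpectrum R) :
    ∃ u v : M, ∀ x : M, ∃ s : R, s ∉ p.asIdeal ∧ s • x ∈ Submodule.span R {u, v} := by
  let S := p.asIdeal.primeCompl
  let Rp := Localization.AtPrime p.asIdeal
  let Mp := LocalizedModule S M
  let f := LocalizedModule.mkLinearMap S M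
  have : Module.Free Rp Mp := Module.free_of_flat_of_isLocalRing
  have hr : Module.finrank Rp Mp = 2 := hM p
  let b : Module.Basis (Fin 2) Rp Mp := Module.finBasisOfFinrankEq Rp Mp hr
  have hs : ∀ i, ∃ (m : M) (s : S), s • b i = f m := by
    intro i
    obtain ⟨⟨m, s⟩, h⟩ := IsLocalizedModule.surj S f (b i)
    exact ⟨m, s, h⟩
  choose m s hs using hs
  refine ⟨m 0, m 1, fun x ↦ ?_⟩
  have hmem : ∀ i, b i ∈ (Submodule.span R {m 0, m 1}).localized₀ S f := by
    intro i
    rw [Submodule.mem_localized₀]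
    refine ⟨m i, ?_, s i, ?_⟩
    · apply Submodule.subset_span
      fin_cases i <;> simp
    · rw [IsLocalizedModule.mk'_eq_iff, hs]
  have htop : f x ∈ (Submodule.span R {m 0, m 1}).localized' Rp S f := by
    rw [← b.sum_repr (f x)]
    exact Submodule.sum_mem _ fun i _ ↦ Submodule.smul_mem _ _ (hmem i)
  rw [Submodule.mem_localized'] at htop
  obtain ⟨n, hn, t, ht⟩ := htop
  rw [IsLocalizedModule.mk'_eq_iff, Submonoid.smul_def, ← map_smul,
    IsLocalizedModule.eq_iff_exists S f] at ht
  obtain ⟨c, hc⟩ := ht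
  refine ⟨c * t, (c * t).2, ?_⟩
  rw [mul_smul]
  have hc' : (c : R) • n = (c : R) • (t : R) • x := hc
  rw [← hc']
  exact Submodule.smul_mem _ _ hn

lemma aux_rank2 {R M L : Type*} [CommRing R] [AddCommGroup M] [Module R M]
    [AddCommGroup L] [Module R L]
    [Module.Finite R M] [Module.Projective R M]
    (hM : ∀ p : PrimeSpectrum R, Module.rankAtStalk M p = 2)
    (B : M →ₗ[R] M →ₗ[R] L) (hB : ∀ x, B x x = 0)
    (e : M →ₗ[R] R) (x m y : M) :
    e x • B m y - e y • B m x = e m • B x y := by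
  rw [← sub_eq_zero]
  set w := e x • B m y - e y • B m x - e m • B x y with hw
  by_contra hne
  have hI : LinearMap.ker (LinearMap.toSpanSingleton R L w) ≠ ⊤ := by
    intro h
    apply hne
    have : (1 : R) ∈ LinearMap.ker (LinearMap.toSpanSingleton R L w) := h ▸ trivial
    simpa using this
  obtain ⟨P, hP, hle⟩ := Ideal.exists_le_maximal _ hI
  obtain ⟨u, v, huv⟩ := aux_local_gen hM ⟨P, hP.isPrime⟩
  obtain ⟨a, ha, hx⟩ := huv x
  obtain ⟨b, hb, hm⟩ := huv m
  obtain ⟨c, hc, hy⟩ := huv y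
  have key := aux_two_gen B hB e u v _ _ _ hx hm hy
  have : a * b * c ∈ LinearMap.ker (LinearMap.toSpanSingleton R L w) := by
    rw [LinearMap.mem_ker, LinearMap.toSpanSingleton_apply, hw]
    rw [← sub_eq_zero] at key
    rw [← key]
    simp only [map_smul, LinearMap.smul_apply, smul_eq_mul]
    module
  rcases hP.isPrime.mem_or_mem (hle this) with h | h
  · rcases hP.isPrime.mem_or_mem h with h | h
    · exact ha h
    · exact hb h
  · exact hc h

lemma aux_trace {R M : Type*} [CommRing R] [AddCommGroup M] [Module R M]
    [Module.Finite R M] [Module.Projective R M]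
    (hM : ∀ p : PrimeSpectrum R, Module.rankAtStalk M p = 2)
    {n : ℕ} (b : Fin n → M) (e : Fin n → M →ₗ[R] R) (h : ∀ x, ∑ i, e i x • b i = x) :
    ∑ i, e i (b i) = 2 := by
  rw [← sub_eq_zero]
  apply eq_zero_of_localization
  intro P hP
  rw [map_sub, sub_eq_zero]
  let S := P.primeCompl
  let Rp := Localization.AtPrime P
  let Mp := LocalizedModule S M
  let f := LocalizedModule.mkLinearMap S M
  have : Module.Free Rp Mp := Module.free_of_flat_of_isLocalRing
  have hr : Module.finrank Rp Mp = 2 := hM ⟨P, hP.isPrime⟩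
  let E : Fin n → Mp →ₗ[Rp] Rp := fun i ↦
    IsLocalizedModule.mapExtendScalars S f (Algebra.linearMap R Rp) Rp (e i)
  have hE : ∀ i x, E i (f x) = algebraMap R Rp (e i x) := fun i x ↦ by
    simp [E, IsLocalizedModule.mapExtendScalars]
  have hid : dualTensorHom Rp Mp Mp (∑ i, E i ⊗ₜ[Rp] f (b i)) = LinearMap.id := by
    apply LinearMap.restrictScalars_injective R
    apply IsLocalizedModule.ext S f (IsLocalizedModule.map_units f)
    ext x
    simp only [LinearMap.comp_apply, LinearMap.restrictScalars_apply, map_sum,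
      LinearMap.sum_apply, LinearMap.id_apply]
    conv_rhs => rw [← h x]
    rw [map_sum]
    refine Finset.sum_congr rfl fun i _ ↦ ?_
    erw [dualTensorHom_apply]
    rw [hE, algebraMap_smul, map_smul]
  have ht := LinearMap.trace_eq_contract_apply Rp Mp (∑ i, E i ⊗ₜ[Rp] f (b i))
  rw [hid, LinearMap.trace_id, hr] at ht
  simp only [map_sum, contractLeft_apply, hE] at ht
  rw [map_sum, map_ofNat]
  exact_mod_cast ht.symm

lemma auxU0 {M : Type*} [DecidableEq (Fin 2)] (x y z : M) :
    Function.update ![x, y] 0 z = ![z, y] := by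
  ext j
  fin_cases j <;> simp [Function.update]

lemma auxU1 {M : Type*} [DecidableEq (Fin 2)] (x y z : M) :
    Function.update ![x, y] 1 z = ![x, z] := by
  ext j
  fin_cases j <;> simp [Function.update]

/-- the bilinear map of an alternating map -/
noncomputable def auxBil {R M L : Type*} [CommRing R] [AddCommGroup M] [Module R M]
    [AddCommGroup L] [Module R L] (f : M [⋀^Fin 2]→ₗ[R] L) : M →ₗ[R] M →ₗ[R] L :=
  LinearMap.mk₂ R (fun x y ↦ f ![x, y])
    (fun x x' y ↦ by have := f.map_update_add ![x, y] 0 x x'; simpa only [auxU0, auxU1] using this)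
    (fun c x y ↦ by have := f.map_update_smul ![x, y] 0 c x; simpa only [auxU0, auxU1] using this)
    (fun x y y' ↦ by have := f.map_update_add ![x, y] 1 y y'; simpa only [auxU0, auxU1] using this)
    (fun c x y ↦ by have := f.map_update_smul ![x, y] 1 c y; simpa only [auxU0, auxU1] using this)

/-- the contraction map -/
noncomputable def auxPhi (R M L : Type*) [CommRing R] [AddCommGroup M] [Module R M]
    [AddCommGroup L] [Module R L] : M ⊗[R] (M [⋀^Fin 2]→ₗ[R] L) →ₗ[R] (M →ₗ[R] L) :=
  TensorProduct.lift (LinearMap.mk₂ R (fun m f ↦ auxBil f m)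
    (fun x y f ↦ by simp) (fun c x f ↦ by simp)
    (fun x f g ↦ by ext; simp [auxBil]) (fun c x f ↦ by ext; simp [auxBil]))

/-- wedge with a functional -/
noncomputable def auxWedge {R M : Type*} (L : Type*) [CommRing R] [AddCommGroup M] [Module R M]
    [AddCommGroup L] [Module R L] (e : M →ₗ[R] R) :
    (M →ₗ[R] L) →ₗ[R] (M [⋀^Fin 2]→ₗ[R] L) where
  toFun g :=
    { toFun := fun v ↦ e (v 0) • g (v 1) - e (v 1) • g (v 0)
      map_update_add' := by
        intro inst v i x y
        rw [Subsingleton.elim inst (instDecidableEqFin 2)]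
        fin_cases i <;> simp <;> module
      map_update_smul' := by
        intro inst v i c x
        rw [Subsingleton.elim inst (instDecidableEqFin 2)]
        fin_cases i <;> simp <;> module
      map_eq_zero_of_eq' := by
        intro v i j hv hij
        fin_cases i <;> fin_cases j <;> simp_all }
  map_add' g g' := by ext v; simp; module
  map_smul' c g := by ext v; simp; module

lemma aux_main (R M L : Type*) [CommRing R] [AddCommGroup M] [Module R M]
    [AddCommGroup L] [Module R L] [Module.Finite R M] [Module.Projective R M]
    (hM : ∀ p : PrimeSpectrum R, Module.rankAtStalk M p = 2) :
    Nonempty ((M ⊗[R] (M [⋀^Fin 2]→ₗ[R] L)) ≃ₗ[R] (M →ₗ[R] L)) := by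
  obtain ⟨n, f, g, -, -, hfg⟩ := Module.Finite.exists_comp_eq_id_of_projective R M
  let b : Fin n → M := fun i ↦ f (Pi.single i 1)
  let e : Fin n → M →ₗ[R] R := fun i ↦ LinearMap.proj i ∘ₗ g
  have h : ∀ x, ∑ i, e i x • b i = x := by
    intro x
    conv_rhs => rw [← LinearMap.id_apply (R := R) x, ← hfg, LinearMap.comp_apply,
      LinearMap.pi_apply_eq_sum_univ f (g x)]
    refine Finset.sum_congr rfl fun i _ ↦ ?_
    simp only [e, b, LinearMap.comp_apply, LinearMap.proj_apply]
    congr 2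
    ext j
    simp [Pi.single_apply, eq_comm]
  have htr := aux_trace hM b e h
  let ψ : (M →ₗ[R] L) →ₗ[R] M ⊗[R] (M [⋀^Fin 2]→ₗ[R] L) :=
    ∑ i, (TensorProduct.mk R M (M [⋀^Fin 2]→ₗ[R] L) (b i)) ∘ₗ auxWedge L (e i)
  refine ⟨LinearEquiv.ofLinearMap (auxPhi R M L) ψ ?_ ?_⟩
  · ext k y
    have h1 : auxPhi R M L (ψ k) y = ∑ i, (e i (b i) • k y - e i y • k (b i)) := by
      simp [ψ, auxPhi, auxBil, auxWedge]
    rw [LinearMap.comp_apply, h1, Finset.sum_sub_distrib, ← Finset.sum_smul, htr]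
    have h2 : ∑ i, e i y • k (b i) = k y := by
      conv_rhs => rw [← h y]
      simp
    rw [h2, LinearMap.id_apply]
    module
  · apply TensorProduct.ext'
    intro m a
    have hB : ∀ x, auxBil a x x = 0 := fun x ↦
      a.map_eq_zero_of_eq ![x, x] (i := 0) (j := 1) (by simp) (by simp)
    have h1 : ∀ i, auxWedge L (e i) (auxBil a m) = e i m • a := by
      intro i
      ext v
      have h2 := aux_rank2 hM (auxBil a) hB (e i) (v 0) m (v 1)
      have h3 : auxBil a (v 0) (v 1) = a v := by
        simp only [auxBil, LinearMap.mk₂_apply]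
        congr 1
        ext j
        fin_cases j <;> rfl
      rw [h3] at h2
      exact h2
    have h2 : auxPhi R M L (m ⊗ₜ a) = auxBil a m := rfl
    rw [LinearMap.comp_apply, h2]
    simp only [ψ, LinearMap.sum_apply, LinearMap.comp_apply, h1, TensorProduct.mk_apply,
      ← TensorProduct.smul_tmul]
    rw [← TensorProduct.sum_tmul, h, LinearMap.id_apply]

/-- If `F ≅ Hom_R(F', L)` with `F`, `F'` finitely generated projective of rank 2 and `L`
invertible, then `F ≅ F' ⊗_R Hom_R(det F', L)`. -/
theorem stmt4 (R : Type*) [CommRing R]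
    (F F' L : Type*) [AddCommGroup F] [Module R F] [AddCommGroup F'] [Module R F']
    [AddCommGroup L] [Module R L]
    [Module.Finite R F] [Module.Projective R F]
    [Module.Finite R F'] [Module.Projective R F']
    [Module.Finite R L] [Module.Projective R L]
    (hF : ∀ p : PrimeSpectrum R, Module.rankAtStalk F p = 2)
    (hF' : ∀ p : PrimeSpectrum R, Module.rankAtStalk F' p = 2)
    (hL : ∀ p : PrimeSpectrum R, Module.rankAtStalk L p = 1)
    (h : Nonempty (F ≃ₗ[R] (F' →ₗ[R] L))) :
    Nonempty (F ≃ₗ[R] (F' ⊗[R] (↥(detMod R F') →ₗ[R] L))) := by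
  obtain ⟨h⟩ := h
  obtain ⟨k⟩ := aux_main R F' L hF'
  exact ⟨h.trans (k.symm.trans (TensorProduct.congr (LinearEquiv.refl R F')
    (exteriorPower.alternatingMapLinearEquiv (R := R) (M := F') (N := L) (n := 2))))⟩
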